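/- arXiv:2005.01811 — 2 statements merged into one kernel-verified Lean document; each statement's English description precedes it below -/
import Mathlib

section
/- Let γ > 1 and Δx > 0, and consider a cell [x_{i−1/2}, x_{i+1/2}] of width Δx with center x_i. Let s : [x_{i−1/2}, x_{i+1/2}] → ℝ be continuous, let p₀ ∈ ℝ, and define the equilibrium pressure p(x) = p₀ + ∫_{x_i}^{x} s(ξ) dξ; assume p(x_{i−1/2}) > 0 and p(x_{i+1/2}) > 0. Let 𝓕 : ℝ³ × ℝ³ → ℝ³ be a numerical flux with the contact property for the ideal gas law: 𝓕((ρ_L, 0, p/(γ−1)), (ρ_R, 0, p/(γ−1))) = (0, p, 0) for all ρ_L, ρ_R, p > 0. Let ρ_L^±, ρ_R^± > 0 be arbitrary interface densities and set F_{i±1/2} = 𝓕((ρ_L^±, 0, p(x_{i±1/2})/(γ−1)), (ρ_R^±, 0, p(x_{i±1/2})/(γ−1))). Then the semi-discrete residual vanishes componentwise: −(1/Δx)(F_{i+1/2} − F_{i−1/2}) + (0, (1/Δx)∫_{x_{i−1/2}}^{x_{i+1/2}} s(ξ) dξ, 0) = (0, 0, 0). In particular the momentum flux difference (1/Δx)(p(x_{i+1/2})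 − p(x_{i−1/2})) equals the cell-averaged momentum source (1/Δx)∫_{x_{i−1/2}}^{x_{i+1/2}} s(ξ) dξ, and the density and energy components of the flux difference vanish. -/
/- STATEMENT 11: With a contact-property numerical flux and interface states
built from the local equilibrium pressure p(x) = p₀ + ∫_{x_i}^x s, the
semi-discrete residual of the well-balanced scheme vanishes componentwise:
the momentum flux difference balances the cell-averaged momentum source, and
the density and energy flux differences vanish. -/
theorem wellbalanced_residual_vanishes
    (γ Δx xi : ℝ) (hγ : 1 < γ) (hΔx : 0 < Δx)
    (s : ℝ → ℝ) (hs : ContinuousOn s (Set.Icc (xi - Δx / 2) (xi + Δx / 2)))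
    (p₀ : ℝ) (p : ℝ → ℝ)
    (hp : ∀ x, p x = p₀ + ∫ ξ in xi..x, s ξ)
    (hpl : 0 < p (xi - Δx / 2)) (hpr : 0 < p (xi + Δx / 2))
    (F : (Fin 3 → ℝ) → (Fin 3 → ℝ) → Fin 3 → ℝ)
    -- contact property for the ideal gas law: Q(ρ, 0, p) = (ρ, 0, p/(γ−1))
    (hF : ∀ ρL ρR pr : ℝ, 0 < ρL → 0 < ρR → 0 < pr →
      F ![ρL, 0, pr / (γ - 1)] ![ρR, 0, pr / (γ - 1)] = ![0, pr, 0])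
    (ρLm ρRm ρLp ρRp : ℝ)
    (hρLm : 0 < ρLm) (hρRm : 0 < ρRm) (hρLp : 0 < ρLp) (hρRp : 0 < ρRp) :
    let Fm := F ![ρLm, 0, p (xi - Δx / 2) / (γ - 1)]
                ![ρRm, 0, p (xi - Δx / 2) / (γ - 1)]
    let Fp := F ![ρLp, 0, p (xi + Δx / 2) / (γ - 1)]
                ![ρRp, 0, p (xi + Δx / 2) / (γ - 1)]
    let S : Fin 3 → ℝ :=
      ![0, (1 / Δx) * ∫ ξ in (xi - Δx / 2)..(xi + Δx / 2), s ξ, 0]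
    (∀ k : Fin 3, -(1 / Δx) * (Fp k - Fm k) + S k = 0) ∧
      (1 / Δx) * (p (xi + Δx / 2) - p (xi - Δx / 2)) =
        (1 / Δx) * ∫ ξ in (xi - Δx / 2)..(xi + Δx / 2), s ξ ∧
      Fp 0 - Fm 0 = 0 ∧ Fp 2 - Fm 2 = 0 := by
  intro Fm Fp S
  have hm : Fm = ![0, p (xi - Δx / 2), 0] := hF _ _ _ hρLm hρRm hpl
  have hpp : Fp = ![0, p (xi + Δx / 2), 0] := hF _ _ _ hρLp hρRp hpr
  have i1 : IntervalIntegrable s MeasureTheory.volume (xi - Δx / 2) xi := by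
    apply ContinuousOn.intervalIntegrable_of_Icc (by linarith)
    exact hs.mono (Set.Icc_subset_Icc le_rfl (by linarith))
  have i2 : IntervalIntegrable s MeasureTheory.volume xi (xi + Δx / 2) := by
    apply ContinuousOn.intervalIntegrable_of_Icc (by linarith)
    exact hs.mono (Set.Icc_subset_Icc (by linarith) le_rfl)
  have key : p (xi + Δx / 2) - p (xi - Δx / 2)
      = ∫ ξ in (xi - Δx / 2)..(xi + Δx / 2), s ξ := by
    rw [hp, hp, ← intervalIntegral.integral_add_adjacent_intervals i1 i2,
      intervalIntegral.integral_symm (xi - Δx / 2) xi]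
    ring
  refine ⟨?_, by rw [key], by simp [hm, hpp], by simp [hm, hpp]⟩
  intro k
  rw [hm, hpp]
  simp only [S, ← key]
  fin_cases k
  · simp
  · simp
  · simp
end

section
/- Let a < b, M > 0, C₀, C₁, C₂ ≥ 0, let m ≥ 1 and 1 ≤ μ ≤ m be natural numbers, and let 0 < Δx ≤ 1. Let ρ, ρ̃, g, g̃ : [a,b] → ℝ be bounded integrable functions with |ρ̃(x)| ≤ M and |g(x)| ≤ M for all x, and suppose sup_{[a,b]} |ρ(x) − ρ̃(x)| ≤ C₁ Δx^m and sup_{[a,b]} |g(x) − g̃(x)| ≤ C₂ Δx^m. Let x_i ∈ [a,b] and let p₀, p̃₀ ∈ ℝ with |p₀ − p̃₀| ≤ C₀ Δx^μ. Define p(x) = p₀ + ∫_{x_i}^{x} ρ(ξ) g(ξ) dξ and p̃(x) = p̃₀ + ∫_{x_i}^{x} ρ̃(ξ) g̃(ξ) dξ. Then there is a constant C depending only on M, C₀, C₁, C₂ and b − a (not on Δx) such that sup_{x ∈ [a,b]} |p(x) − p̃(x)| ≤ C Δx^μ; i.e. the locally reconstructed equilibrium pressure profile approximates the exact hydrostatic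 pressure profile to order μ = min(q, m). -/
open MeasureTheory

/- STATEMENT 12: The locally reconstructed equilibrium pressure profile
p(x) = p₀ + ∫_{x_i}^x ρ g approximates the exact hydrostatic pressure
p̃(x) = p̃₀ + ∫_{x_i}^x ρ̃ g̃ to order μ = min(q,m), uniformly on [a,b],
with a constant depending only on M, C₀, C₁, C₂ and b − a. -/
theorem equilibrium_pressure_accuracy
    (a b M C₀ C₁ C₂ : ℝ) (hab : a < b) (hM : 0 < M)
    (hC₀ : 0 ≤ C₀) (hC₁ : 0 ≤ C₁) (hC₂ : 0 ≤ C₂)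
    (m μ : ℕ) (hm : 1 ≤ m) (hμ : 1 ≤ μ) (hμm : μ ≤ m) :
    ∃ C : ℝ, 0 ≤ C ∧
      ∀ (Δx : ℝ), 0 < Δx → Δx ≤ 1 →
      ∀ (ρ ρt g gt : ℝ → ℝ) (xi p₀ pt₀ : ℝ),
        xi ∈ Set.Icc a b →
        IntervalIntegrable (fun ξ => ρ ξ * g ξ) volume a b →
        IntervalIntegrable (fun ξ => ρt ξ * gt ξ) volume a b →
        (∀ x ∈ Set.Icc a b, |ρt x| ≤ M) →
        (∀ x ∈ Set.Icc a b, |g x| ≤ M) →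
        (∀ x ∈ Set.Icc a b, |ρ x - ρt x| ≤ C₁ * Δx ^ m) →
        (∀ x ∈ Set.Icc a b, |g x - gt x| ≤ C₂ * Δx ^ m) →
        |p₀ - pt₀| ≤ C₀ * Δx ^ μ →
        ∀ x ∈ Set.Icc a b,
          |(p₀ + ∫ ξ in xi..x, ρ ξ * g ξ) -
              (pt₀ + ∫ ξ in xi..x, ρt ξ * gt ξ)| ≤ C * Δx ^ μ := by
  have hba : 0 ≤ b - a := by linarith
  have hK : 0 ≤ M * (C₁ + C₂) := by positivity
  refine ⟨C₀ + M * (C₁ + C₂) * (b - a), by positivity, ?_⟩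
  intro Δx hΔ hΔ1 ρ ρt g gt xi p₀ pt₀ hxi hi hit hρt hg hρ hgg hp x hx
  have hsub : Set.uIcc xi x ⊆ Set.Icc a b := Set.uIcc_subset_Icc hxi hx
  have hsub' : Set.uIcc xi x ⊆ Set.uIcc a b := by rwa [Set.uIcc_of_le hab.le]
  have hpow : Δx ^ m ≤ Δx ^ μ := pow_le_pow_of_le_one hΔ.le hΔ1 hμm
  have hμ0 : 0 ≤ Δx ^ μ := by positivity
  have hI : |∫ ξ in xi..x, (ρ ξ * g ξ - ρt ξ * gt ξ)|
      ≤ M * (C₁ + C₂) * Δx ^ μ * |x - xi| := by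
    rw [← Real.norm_eq_abs]
    apply intervalIntegral.norm_integral_le_of_norm_le_const
    intro ξ hξ
    have h := hsub (Set.uIoc_subset_uIcc hξ)
    rw [Real.norm_eq_abs]
    have e : ρ ξ * g ξ - ρt ξ * gt ξ = (ρ ξ - ρt ξ) * g ξ + ρt ξ * (g ξ - gt ξ) := by ring
    have h1 : |ρ ξ - ρt ξ| * |g ξ| ≤ (C₁ * Δx ^ m) * M :=
      mul_le_mul (hρ ξ h) (hg ξ h) (abs_nonneg _) (by positivity)
    have h2 : |ρt ξ| * |g ξ - gt ξ| ≤ M * (C₂ * Δx ^ m) :=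
      mul_le_mul (hρt ξ h) (hgg ξ h) (abs_nonneg _) hM.le
    have h3 := abs_add_le ((ρ ξ - ρt ξ) * g ξ) (ρt ξ * (g ξ - gt ξ))
    rw [abs_mul, abs_mul] at h3
    rw [e]
    have h4 := mul_le_mul_of_nonneg_left hpow hK
    linarith
  rw [intervalIntegral.integral_sub (hi.mono_set hsub') (hit.mono_set hsub')] at hI
  have hd : |x - xi| ≤ b - a := by
    rw [abs_le]; constructor <;> linarith [hx.1, hx.2, hxi.1, hxi.2]
  have h5 := mul_le_mul_of_nonneg_left hd (mul_nonneg hK hμ0)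
  have h6 := abs_add_le (p₀ - pt₀) ((∫ ξ in xi..x, ρ ξ * g ξ) - ∫ ξ in xi..x, ρt ξ * gt ξ)
  rw [add_sub_add_comm]
  linarith
end
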